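/- arXiv:1805.03581 — 12 statements merged into one kernel-verified Lean document; each statement's English description precedes it below -/
import Mathlib

section
/- Let f be a self-usage utility function and let 0 ≤ p < q < f'(0). Let s₀, s ∈ [0,1) satisfy f'(1−s₀) = p and f'(1−s) = q. Then for every subsidy program W and every maximizer s̃ of σ ↦ f(1−σ) + p·σ + W(σ) over [0,1], the platform's revenue satisfies (q−p)·s̃ − W(s̃) ≤ (q−p)·s − (f(1−s₀) − f(1−s) − p·(s−s₀)). (This upper bound equals B*·t* for the linear loyalty program with B* = q−p and t* = s − (f(1−s₀) − f(1−s) − p·(s−s₀))/(q−p), so no subsidy program can yield more revenue than the optimal linear loyalty program.) -/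
/-- A self-usage utility function `f` with derivative `f'`:
differentiable on `[0,1]`, strictly increasing on `[0,1]`,
strictly concave on `[0,1]` (with `f'` strictly decreasing), and `f' 1 = 0`. -/
def SelfUsage (f f' : ℝ → ℝ) : Prop :=
  (∀ x ∈ Set.Icc (0:ℝ) 1, HasDerivWithinAt f (f' x) (Set.Icc (0:ℝ) 1) x) ∧
  StrictMonoOn f (Set.Icc (0:ℝ) 1) ∧
  StrictConcaveOn ℝ (Set.Icc (0:ℝ) 1) f ∧
  StrictAntiOn f' (Set.Icc (0:ℝ) 1) ∧
  f' 1 = 0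

/-- A subsidy program: nondecreasing on `[0,1]`, zero at `0`, nonnegative. -/
def SubsidyProgram (W : ℝ → ℝ) : Prop :=
  MonotoneOn W (Set.Icc (0:ℝ) 1) ∧ W 0 = 0 ∧ ∀ σ ∈ Set.Icc (0:ℝ) 1, 0 ≤ W σ

/-- no subsidy program can yield more revenue than the optimal
linear loyalty program in a homogeneous monopolistic market. -/
theorem optimal_LLP_revenue_upper_bound
    (f f' : ℝ → ℝ) (hf : SelfUsage f f')
    (p q : ℝ) (hp : 0 ≤ p) (hpq : p < q) (hq : q < f' 0)
    (s₀ s : ℝ) (hs₀ : s₀ ∈ Set.Ico (0:ℝ) 1) (hs : s ∈ Set.Ico (0:ℝ) 1)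
    (hds₀ : f' (1 - s₀) = p) (hds : f' (1 - s) = q)
    (W : ℝ → ℝ) (hW : SubsidyProgram W)
    (st : ℝ) (hst : st ∈ Set.Icc (0:ℝ) 1)
    (hmax : ∀ σ ∈ Set.Icc (0:ℝ) 1,
      f (1 - σ) + p * σ + W σ ≤ f (1 - st) + p * st + W st) :
    (q - p) * st - W st ≤ (q - p) * s - (f (1 - s₀) - f (1 - s) - p * (s - s₀)) := by
  obtain ⟨hd, -, hc, -, -⟩ := hf
  obtain ⟨-, -, hWn⟩ := hW
  have hx : 1 - s ∈ Set.Icc (0:ℝ) 1 := ⟨by linarith [hs.2], by linarith [hs.1]⟩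
  have hy : 1 - st ∈ Set.Icc (0:ℝ) 1 := ⟨by linarith [hst.2], by linarith [hst.1]⟩
  have hD := hd _ hx
  rw [hds] at hD
  have key : f (1 - st) ≤ f (1 - s) + q * (s - st) := by
    rcases lt_trichotomy (1 - s) (1 - st) with h | h | h
    · have h1 := hc.concaveOn.slope_le_of_hasDerivWithinAt hx hy h hD
      rw [slope_def_field, div_le_iff₀ (by linarith)] at h1
      linarith
    · have : s = st := by linarith
      subst this
      simp
    · have h1 := hc.concaveOn.le_slope_of_hasDerivWithinAt hy hx h hD
      rw [slope_def_field, le_div_iff₀ (by linarith)] at h1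
      linarith
  have h0 : s₀ ∈ Set.Icc (0:ℝ) 1 := ⟨hs₀.1, hs₀.2.le⟩
  have h1 := hmax s₀ h0
  have h2 := hWn s₀ h0
  linarith
end

section
/- Let f be a self-usage utility function and let 0 ≤ p < q < f'(0). Let s₀, s ∈ [0,1) satisfy f'(1−s₀) = p and f'(1−s) = q, and set B* = q−p and t* = s − (f(1−s₀) − f(1−s) − p·(s−s₀))/(q−p). Then s is a global maximizer over [0,1] of the owner's utility under the linear loyalty program (B*, t*), namely of U(σ) = f(1−σ) + p·σ + B*·max(σ−t*, 0), and the resulting platform revenue equals (q−p)·s − B*·(s−t*) = B*·t*. -/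
/-- Tangent-line inequality for a self-usage utility function. -/
lemma SelfUsage.tangent {f f' : ℝ → ℝ} (hf : SelfUsage f f') {x y : ℝ}
    (hx : x ∈ Set.Icc (0:ℝ) 1) (hy : y ∈ Set.Icc (0:ℝ) 1) :
    f y ≤ f x + f' x * (y - x) := by
  obtain ⟨hd, -, hc, -, -⟩ := hf
  rcases lt_trichotomy x y with h | h | h
  · have h1 := hc.concaveOn.slope_le_of_hasDerivWithinAt hx hy h (hd x hx)
    rw [slope_def_field, div_le_iff₀ (by linarith)] at h1
    linarith
  · subst h; simp
  · have h1 := hc.concaveOn.le_slope_of_hasDerivWithinAt hy hx h (hd x hx)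
    rw [slope_def_field, le_div_iff₀ (by linarith)] at h1
    linarith

/-- under the optimal linear loyalty program (B*, t*), the sharing
level s with f'(1-s) = q is a global maximizer of the owner's utility, and the
resulting platform revenue equals B* · t*. -/
theorem optimal_LLP_maximizer_and_revenue
    (f f' : ℝ → ℝ) (hf : SelfUsage f f')
    (p q : ℝ) (hp : 0 ≤ p) (hpq : p < q) (hq : q < f' 0)
    (s₀ s : ℝ) (hs₀ : s₀ ∈ Set.Ico (0:ℝ) 1) (hs : s ∈ Set.Ico (0:ℝ) 1)
    (hds₀ : f' (1 - s₀) = p) (hds : f' (1 - s) = q)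
    (B t : ℝ) (hB : B = q - p)
    (ht : t = s - (f (1 - s₀) - f (1 - s) - p * (s - s₀)) / (q - p)) :
    (∀ σ ∈ Set.Icc (0:ℝ) 1,
      f (1 - σ) + p * σ + B * max (σ - t) 0
        ≤ f (1 - s) + p * s + B * max (s - t) 0) ∧
    (q - p) * s - B * (s - t) = B * t := by
  have hx₀ : 1 - s₀ ∈ Set.Icc (0:ℝ) 1 := ⟨by linarith [hs₀.2], by linarith [hs₀.1]⟩
  have hx : 1 - s ∈ Set.Icc (0:ℝ) 1 := ⟨by linarith [hs.2], by linarith [hs.1]⟩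
  have hBpos : 0 < B := by linarith
  have key : B * (s - t) = f (1 - s₀) - f (1 - s) - p * (s - s₀) := by
    have : q - p ≠ 0 := by linarith
    rw [ht, hB]
    field_simp
    ring
  have h0 := hf.tangent hx₀ hx
  rw [hds₀] at h0
  have hst : 0 ≤ s - t := by
    refine nonneg_of_mul_nonneg_right (a := B) ?_ hBpos
    rw [key]
    linarith
  refine ⟨fun σ hσ => ?_, by rw [hB]; ring⟩
  have hy : 1 - σ ∈ Set.Icc (0:ℝ) 1 := ⟨by linarith [hσ.2], by linarith [hσ.1]⟩
  have h1 := hf.tangent hx₀ hy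
  have h2 := hf.tangent hx hy
  rw [hds₀] at h1
  rw [hds] at h2
  rw [max_eq_left hst]
  rcases max_cases (σ - t) 0 with ⟨h, -⟩ | ⟨h, -⟩
  · rw [h, hB]
    linarith
  · rw [h, key]
    linarith
end

section
/- Let f be a self-usage utility function and let 0 ≤ p < q < f'(0). Let s₀, s ∈ [0,1) satisfy f'(1−s₀) = p and f'(1−s) = q (so s₀ < s). Then 0 < f(1−s₀) − f(1−s) − p·(s−s₀) < (q−p)·(s−s₀); consequently the threshold t* = s − (f(1−s₀) − f(1−s) − p·(s−s₀))/(q−p) of the optimal linear loyalty program satisfies s₀ < t* < s. -/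
/-- the threshold t* of the optimal linear loyalty program lies
strictly between s₀ and s. -/
theorem optimal_threshold_bounds
    (f f' : ℝ → ℝ) (hf : SelfUsage f f')
    (p q : ℝ) (hp : 0 ≤ p) (hpq : p < q) (hq : q < f' 0)
    (s₀ s : ℝ) (hs₀ : s₀ ∈ Set.Ico (0:ℝ) 1) (hs : s ∈ Set.Ico (0:ℝ) 1)
    (hds₀ : f' (1 - s₀) = p) (hds : f' (1 - s) = q) :
    0 < f (1 - s₀) - f (1 - s) - p * (s - s₀) ∧
    f (1 - s₀) - f (1 - s) - p * (s - s₀) < (q - p) * (s - s₀) ∧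
    s₀ < s - (f (1 - s₀) - f (1 - s) - p * (s - s₀)) / (q - p) ∧
    s - (f (1 - s₀) - f (1 - s) - p * (s - s₀)) / (q - p) < s := by
  obtain ⟨hd, -, -, hanti, -⟩ := hf
  obtain ⟨h1, h2⟩ := hs₀
  obtain ⟨h3, h4⟩ := hs
  have ha : (1 - s) ∈ Set.Icc (0:ℝ) 1 := ⟨by linarith, by linarith⟩
  have hb : (1 - s₀) ∈ Set.Icc (0:ℝ) 1 := ⟨by linarith, by linarith⟩
  have hab : 1 - s < 1 - s₀ := by
    by_contra h
    have := hanti.antitoneOn hb ha (not_lt.mp h)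
    linarith
  obtain ⟨c, ⟨hc1, hc2⟩, hc⟩ := exists_hasDerivAt_eq_slope f f' hab
    (fun x hx => ((hd x ⟨by linarith [hx.1], by linarith [hx.2]⟩).continuousWithinAt).mono
      (Set.Icc_subset_Icc (by linarith) (by linarith)))
    (fun x hx => (hd x ⟨by linarith [hx.1], by linarith [hx.2]⟩).hasDerivAt
      (Icc_mem_nhds (by linarith [hx.1]) (by linarith [hx.2])))
  have hcm : c ∈ Set.Icc (0:ℝ) 1 := ⟨by linarith, by linarith⟩
  have hq' := hanti ha hcm hc1
  have hp' := hanti hcm hb hc2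
  rw [hds] at hq'
  rw [hds₀] at hp'
  have hpos : 0 < s - s₀ := by linarith
  have hslope : f (1 - s₀) - f (1 - s) = f' c * (s - s₀) := by
    rw [eq_div_iff (by linarith)] at hc
    rw [← hc]
    ring
  have hqp : 0 < q - p := by linarith
  have e1 : 0 < f (1 - s₀) - f (1 - s) - p * (s - s₀) := by
    rw [hslope]; nlinarith
  have e2 : f (1 - s₀) - f (1 - s) - p * (s - s₀) < (q - p) * (s - s₀) := by
    rw [hslope]; nlinarith
  refine ⟨e1, e2, ?_, ?_⟩
  · have := (div_lt_iff₀' hqp).mpr e2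
    linarith
  · have := div_pos e1 hqp
    linarith
end

section
/- Let f be a self-usage utility function, let q > 0 with q < f'(0), and let s ∈ (0,1) satisfy f'(1−s) = q. For 0 ≤ p < q let s₀(p) ∈ [0,1) satisfy f'(1−s₀(p)) = p, and define the optimal-linear-loyalty-program revenue R(p) = (q−p)·s − (f(1−s₀(p)) − f(1−s) − p·(s−s₀(p))). Then R(p) < R(0) = q·s − (f(1) − f(1−s)) for every p with 0 < p < q; that is, the platform's revenue under the optimal linear loyalty program is maximized by setting the base pay to p = 0, with bonus B = q and threshold t = s − (f(1) − f(1−s))/q. -/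
/-- the optimal-linear-loyalty-program revenue is maximized at
base pay p = 0, where it equals q·s − (f(1) − f(1−s)). -/
theorem zero_base_pay_optimal
    (f f' : ℝ → ℝ) (hf : SelfUsage f f')
    (q : ℝ) (hq : 0 < q) (hqf : q < f' 0)
    (s : ℝ) (hs : s ∈ Set.Ioo (0:ℝ) 1) (hds : f' (1 - s) = q)
    (s₀ : ℝ → ℝ)
    (hs₀ : ∀ p, 0 ≤ p → p < q → s₀ p ∈ Set.Ico (0:ℝ) 1 ∧ f' (1 - s₀ p) = p) :
    (∀ p, 0 < p → p < q →
      (q - p) * s - (f (1 - s₀ p) - f (1 - s) - p * (s - s₀ p))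
        < (q - 0) * s - (f (1 - s₀ 0) - f (1 - s) - 0 * (s - s₀ 0))) ∧
    (q - 0) * s - (f (1 - s₀ 0) - f (1 - s) - 0 * (s - s₀ 0))
      = q * s - (f 1 - f (1 - s)) := by
  obtain ⟨hd, _, _, hanti, h1⟩ := hf
  have h00 : s₀ 0 = 0 := by
    obtain ⟨⟨ha, hb⟩, he⟩ := hs₀ 0 le_rfl hq
    have := hanti.injOn (x₁ := 1 - s₀ 0) (x₂ := 1) ⟨by linarith, by linarith⟩
      ⟨by norm_num, le_rfl⟩ (by rw [he, h1])
    linarith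
  rw [h00]
  refine ⟨fun p hp hpq => ?_, by ring_nf⟩
  obtain ⟨⟨ha, hb⟩, he⟩ := hs₀ p hp.le hpq
  have hpos : 0 < s₀ p := by
    rcases ha.eq_or_lt with h | h
    · rw [← h, sub_zero, h1] at he
      linarith
    · exact h
  obtain ⟨c, ⟨hc1, hc2⟩, hc⟩ := exists_hasDerivAt_eq_slope f f' (a := 1 - s₀ p) (b := 1)
    (by linarith)
    (fun x hx => (hd x ⟨by linarith [hx.1], hx.2⟩).continuousWithinAt.mono
      (Set.Icc_subset_Icc (by linarith) le_rfl))
    (fun x hx => (hd x ⟨by linarith [hx.1], hx.2.le⟩).hasDerivAt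
      (Icc_mem_nhds (by linarith [hx.1]) hx.2))
  have hlt : f' c < p := by
    have := hanti (a := 1 - s₀ p) (b := c) ⟨by linarith, by linarith⟩
      ⟨by linarith, hc2.le⟩ hc1
    rwa [he] at this
  rw [eq_div_iff (by linarith)] at hc
  have := mul_lt_mul_of_pos_right hlt hpos
  rw [sub_zero (1:ℝ)]
  linarith
end

section
/- Let f_i and f_j be self-usage utility functions with f_i'(x) > f_j'(x) for all x ∈ [0,1). Let p ≥ 0 and let B : [0,1] → ℝ be a nonnegative nondecreasing marginal bonus, and for each owner k ∈ {i, j} define the utility U_k(σ) = f_k(1−σ) + p·σ + ∫₀^σ B(u) du for σ ∈ [0,1]. If s_i maximizes U_i over [0,1], then every maximizer s_j of U_j over [0,1] satisfies s_j ≥ s_i; in particular, if owner i participates in the loyalty program by sharing strictly more than his no-bonus level s_{i,0} (defined by f_i'(1−s_{i,0}) = p), then owner j shares at least s_i > s_{i,0}. -/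
/-- under a nonnegative nondecreasing marginal bonus, if owner i
(with larger marginal self-usage utility) maximizes at sᵢ, then every maximizer
of owner j's utility is at least sᵢ. -/
theorem lower_marginal_owner_shares_more
    (fi fi' fj fj' : ℝ → ℝ) (hfi : SelfUsage fi fi') (hfj : SelfUsage fj fj')
    (horder : ∀ x ∈ Set.Ico (0:ℝ) 1, fj' x < fi' x)
    (p : ℝ) (hp : 0 ≤ p)
    (B : ℝ → ℝ) (hBnn : ∀ u, 0 ≤ B u) (hBmono : MonotoneOn B (Set.Icc (0:ℝ) 1))
    (si : ℝ) (hsi : si ∈ Set.Icc (0:ℝ) 1)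
    (hsimax : ∀ σ ∈ Set.Icc (0:ℝ) 1,
      fi (1 - σ) + p * σ + ∫ u in (0:ℝ)..σ, B u
        ≤ fi (1 - si) + p * si + ∫ u in (0:ℝ)..si, B u)
    (sj : ℝ) (hsj : sj ∈ Set.Icc (0:ℝ) 1)
    (hsjmax : ∀ σ ∈ Set.Icc (0:ℝ) 1,
      fj (1 - σ) + p * σ + ∫ u in (0:ℝ)..σ, B u
        ≤ fj (1 - sj) + p * sj + ∫ u in (0:ℝ)..sj, B u) :
    si ≤ sj := by
  by_contra! hlt
  have hmono : StrictMonoOn (fun x => fi x - fj x) (Set.Icc (0:ℝ) 1) := by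
    have hd : ∀ x ∈ Set.Icc (0:ℝ) 1, HasDerivWithinAt (fun x => fi x - fj x)
        (fi' x - fj' x) (Set.Icc (0:ℝ) 1) x := fun x hx => (hfi.1 x hx).sub (hfj.1 x hx)
    refine strictMonoOn_of_deriv_pos (convex_Icc 0 1)
      (fun x hx => (hd x hx).continuousWithinAt) ?_
    intro x hx
    rw [interior_Icc] at hx
    have h := (hd x ⟨hx.1.le, hx.2.le⟩).hasDerivAt (Icc_mem_nhds hx.1 hx.2)
    rw [h.deriv]
    linarith [horder x ⟨hx.1.le, hx.2⟩]
  have h1 := hsimax sj hsj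
  have h2 := hsjmax si hsi
  have h3 : fi (1 - si) - fj (1 - si) < fi (1 - sj) - fj (1 - sj) :=
    hmono (a := 1 - si) ⟨by linarith [hsi.2], by linarith [hsi.1]⟩
      ⟨by linarith [hsj.2], by linarith [hsj.1]⟩ (by linarith)
  linarith
end

section
/- Let f_1 be a self-usage utility function, let β > 0, and let 0 < p_a < p_b < f_1'(0), with q_a = (1+β)·p_a. Let s_{1a}, s_{1b} ∈ (0,1) satisfy f_1'(1−s_{1a}) = p_a and f_1'(1−s_{1b}) = p_b (so s_{1a} < s_{1b}), and let λ = s_{1a}/s_{1b}. If p_b < p_a·(1 + λ·β), then the sign-up bonus B_a = (p_b − p_a)·s_{1b} − (f_1(1−s_{1a}) − f_1(1−s_{1b}) − p_a·(s_{1b} − s_{1a}))) satisfies: (a) B_a > 0; (b) owner 1 weakly prefers platform a, i.e. f_1(1−s_{1a}) + p_a·s_{1a} + B_a ≥ f_1(1−s_{1b}) + p_b·s_{1b}; and (c) platform a's revenue is strictly positive: (q_a − p_a)·s_{1a} − B_a = q_a·s_{1a} − p_b·s_{1b} + f_1(1−s_{1a}) − f_1(1−s_{1b}) > 0. -/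
/-- if p_b < p_a(1 + λβ), the stated sign-up bonus is positive,
attracts owner 1 to platform a, and leaves platform a strictly positive
revenue. -/
theorem signup_bonus_positive_revenue
    (f f' : ℝ → ℝ) (hf : SelfUsage f f')
    (β pa pb : ℝ) (hβ : 0 < β) (hpa : 0 < pa) (hab : pa < pb) (hbf : pb < f' 0)
    (qa : ℝ) (hqa : qa = (1 + β) * pa)
    (s1a s1b : ℝ) (hs1a : s1a ∈ Set.Ioo (0:ℝ) 1) (hs1b : s1b ∈ Set.Ioo (0:ℝ) 1)
    (hda : f' (1 - s1a) = pa) (hdb : f' (1 - s1b) = pb)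
    (hlam : pb < pa * (1 + (s1a / s1b) * β))
    (Ba : ℝ)
    (hBa : Ba = (pb - pa) * s1b - (f (1 - s1a) - f (1 - s1b) - pa * (s1b - s1a))) :
    0 < Ba ∧
    f (1 - s1b) + pb * s1b ≤ f (1 - s1a) + pa * s1a + Ba ∧
    (qa - pa) * s1a - Ba = qa * s1a - pb * s1b + f (1 - s1a) - f (1 - s1b) ∧
    0 < (qa - pa) * s1a - Ba := by
  obtain ⟨hd, -, -, hanti, -⟩ := hf
  obtain ⟨ha0, ha1⟩ := hs1a
  obtain ⟨hb0, hb1⟩ := hs1b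
  have hma : (1 - s1a) ∈ Set.Icc (0:ℝ) 1 := ⟨by linarith, by linarith⟩
  have hmb : (1 - s1b) ∈ Set.Icc (0:ℝ) 1 := ⟨by linarith, by linarith⟩
  have hlt : 1 - s1b < 1 - s1a := by
    rw [← hanti.lt_iff_gt hma hmb, hda, hdb]
    exact hab
  obtain ⟨c, hc, hce⟩ := exists_hasDerivAt_eq_slope f f' hlt
    (fun x hx => ((hd x ⟨by linarith [hx.1], by linarith [hx.2]⟩).continuousWithinAt).mono
      (Set.Icc_subset_Icc hmb.1 hma.2))
    (fun x hx => (hd x ⟨by linarith [hx.1], by linarith [hx.2]⟩).hasDerivAt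
      (Icc_mem_nhds (by linarith [hx.1]) (by linarith [hx.2])))
  have hmc : c ∈ Set.Icc (0:ℝ) 1 := ⟨by linarith [hc.1], by linarith [hc.2]⟩
  have h1 : pa < f' c := hda ▸ hanti hmc hma hc.2
  have h2 : f' c < pb := hdb ▸ hanti hmb hmc hc.1
  rw [eq_div_iff (by linarith)] at hce
  have hpos : 0 < s1b - s1a := by linarith
  have h3 := mul_lt_mul_of_pos_right h1 hpos
  have h4 := mul_lt_mul_of_pos_right h2 hpos
  have h5 : pb * s1b < pa * s1b + pa * s1a * β := by
    have h := mul_lt_mul_of_pos_right hlam hb0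
    have e : pa * (1 + (s1a / s1b) * β) * s1b = pa * s1b + pa * s1a * β := by
      field_simp
    linarith
  have h6 := mul_pos (sub_pos.2 hab) ha0
  subst hqa hBa
  refine ⟨by nlinarith, by nlinarith, by ring, by nlinarith⟩
end

section
/- Let f_1 and f_2 be self-usage utility functions with f_1'(x) > f_2'(x) for all x ∈ [0,1), and let 0 ≤ p_a < p_b < min(f_1'(0), f_2'(0)). For i = 1, 2 let s_{ia}, s_{ib} ∈ [0,1) satisfy f_i'(1−s_{ia}) = p_a and f_i'(1−s_{ib}) = p_b. Then the minimum sign-up bonus required to attract owner 2 strictly exceeds that required to attract owner 1: (p_b − p_a)·s_{2b} − (f_2(1−s_{2a}) − f_2(1−s_{2b}) − p_a·(s_{2b} − s_{2a})) > (p_b − p_a)·s_{1b} − (f_1(1−s_{1a}) − f_1(1−s_{1b}) − p_a·(s_{1b} − s_{1a})). Consequently, any sign-up bonus on platform a high enough to attract owner 2 away from platform b also attracts owner 1. -/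
theorem mvt_aux (f f' : ℝ → ℝ)
    (hf : ∀ x ∈ Set.Icc (0:ℝ) 1, HasDerivWithinAt f (f' x) (Set.Icc (0:ℝ) 1) x)
    (u v : ℝ) (hu : 0 ≤ u) (hv : v ≤ 1) (huv : u < v) :
    ∃ c, u < c ∧ c < v ∧ f v - f u = f' c * (v - u) := by
  obtain ⟨c, hc, h⟩ := exists_hasDerivAt_eq_slope f f' huv
    (fun x hx => ((hf x ⟨hu.trans hx.1, hx.2.trans hv⟩).continuousWithinAt).mono
      (Set.Icc_subset_Icc hu hv))
    (fun x hx => (hf x ⟨hu.trans hx.1.le, hx.2.le.trans hv⟩).hasDerivAt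
      (Icc_mem_nhds (hu.trans_lt hx.1) (hx.2.trans_le hv)))
  refine ⟨c, hc.1, hc.2, ?_⟩
  have : v - u ≠ 0 := by linarith
  rw [h]; field_simp

theorem tangent_aux (f f' : ℝ → ℝ) (hf : SelfUsage f f')
    (u v : ℝ) (hu : 0 ≤ u) (hv : v ≤ 1) (huv : u < v) :
    f' v * (v - u) < f v - f u ∧ f v - f u < f' u * (v - u) := by
  obtain ⟨c, h1, h2, h⟩ := mvt_aux f f' hf.1 u v hu hv huv
  have ha := hf.2.2.2.1
  have hA := ha (a := c) (b := v) ⟨by linarith, by linarith⟩ ⟨by linarith, hv⟩ h2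
  have hB := ha (a := u) (b := c) ⟨hu, by linarith⟩ ⟨by linarith, by linarith⟩ h1
  rw [h]
  constructor <;> apply mul_lt_mul_of_pos_right _ (by linarith) <;> assumption

/-- the minimum sign-up bonus needed to attract owner 2 (lower
marginal self-usage utility) strictly exceeds the one needed for owner 1. -/
theorem signup_bonus_owner2_harder
    (f1 f1' f2 f2' : ℝ → ℝ) (hf1 : SelfUsage f1 f1') (hf2 : SelfUsage f2 f2')
    (horder : ∀ x ∈ Set.Ico (0:ℝ) 1, f2' x < f1' x)
    (pa pb : ℝ) (hpa : 0 ≤ pa) (hab : pa < pb) (hbf : pb < min (f1' 0) (f2' 0))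
    (s1a s1b s2a s2b : ℝ)
    (h1a : s1a ∈ Set.Ico (0:ℝ) 1) (h1b : s1b ∈ Set.Ico (0:ℝ) 1)
    (h2a : s2a ∈ Set.Ico (0:ℝ) 1) (h2b : s2b ∈ Set.Ico (0:ℝ) 1)
    (hd1a : f1' (1 - s1a) = pa) (hd1b : f1' (1 - s1b) = pb)
    (hd2a : f2' (1 - s2a) = pa) (hd2b : f2' (1 - s2b) = pb) :
    (pb - pa) * s1b - (f1 (1 - s1a) - f1 (1 - s1b) - pa * (s1b - s1a))
      < (pb - pa) * s2b - (f2 (1 - s2a) - f2 (1 - s2b) - pa * (s2b - s2a)) := by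
  obtain ⟨ha1, ha2⟩ := h1a
  obtain ⟨hb1, hb2⟩ := h1b
  obtain ⟨hc1, hc2⟩ := h2a
  obtain ⟨hd1, hd2⟩ := h2b
  obtain ⟨x1a, e1a⟩ : ∃ x, x = 1 - s1a := ⟨_, rfl⟩
  obtain ⟨x1b, e1b⟩ : ∃ x, x = 1 - s1b := ⟨_, rfl⟩
  obtain ⟨x2a, e2a⟩ : ∃ x, x = 1 - s2a := ⟨_, rfl⟩
  obtain ⟨x2b, e2b⟩ : ∃ x, x = 1 - s2b := ⟨_, rfl⟩
  rw [← e1a, ← e1b, ← e2a, ← e2b]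
  rw [← e1a] at hd1a
  rw [← e1b] at hd1b
  rw [← e2a] at hd2a
  rw [← e2b] at hd2b
  have m1a : x1a ∈ Set.Icc (0:ℝ) 1 := ⟨by linarith, by linarith⟩
  have m1b : x1b ∈ Set.Icc (0:ℝ) 1 := ⟨by linarith, by linarith⟩
  have m2a : x2a ∈ Set.Icc (0:ℝ) 1 := ⟨by linarith, by linarith⟩
  have m2b : x2b ∈ Set.Icc (0:ℝ) 1 := ⟨by linarith, by linarith⟩
  have an1 := hf1.2.2.2.1
  have an2 := hf2.2.2.2.1
  have l1 : x1b < x1a := (an1.lt_iff_gt m1a m1b).1 (by linarith)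
  have l2 : x2b < x2a := (an2.lt_iff_gt m2a m2b).1 (by linarith)
  have lb : x2b < x1b := by
    have := horder x1b ⟨m1b.1, by linarith [m1a.2]⟩
    exact (an2.lt_iff_gt m1b m2b).1 (by linarith)
  have la : x2a ≤ x1a := by
    rcases m1a.2.lt_or_eq with h | h
    · have := horder x1a ⟨m1a.1, h⟩
      exact ((an2.lt_iff_gt m1a m2a).1 (by linarith)).le
    · linarith [m2a.2]
  obtain rfl : s1a = 1 - x1a := by linarith
  obtain rfl : s1b = 1 - x1b := by linarith
  obtain rfl : s2a = 1 - x2a := by linarith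
  obtain rfl : s2b = 1 - x2b := by linarith
  rcases lt_or_ge x1b x2a with h | h
  · have A := (tangent_aux f2 f2' hf2 x2b x1b m2b.1 m1b.2 lb).2
    have B : f2 x2a - f2 x1b ≤ f1 x2a - f1 x1b := by
      obtain ⟨c, c1, c2, hc⟩ := mvt_aux (fun x => f1 x - f2 x) (fun x => f1' x - f2' x)
        (fun x hx => (hf1.1 x hx).sub (hf2.1 x hx)) x1b x2a m1b.1 m2a.2 h
      have := horder c ⟨by linarith [m1b.1], by linarith [m2a.2]⟩
      have : 0 ≤ (f1' c - f2' c) * (x2a - x1b) :=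
        mul_nonneg (by linarith) (by linarith)
      linarith
    have C : pa * (x1a - x2a) ≤ f1 x1a - f1 x2a := by
      rcases la.lt_or_eq with h | h
      · have := (tangent_aux f1 f1' hf1 x2a x1a m2a.1 m1a.2 h).1
        rw [hd1a] at this
        exact this.le
      · simp [h]
    rw [hd2b] at A
    linarith
  · have A := (tangent_aux f2 f2' hf2 x2b x2a m2b.1 m2a.2 l2).2
    have B := (tangent_aux f1 f1' hf1 x1b x1a m1b.1 m1a.2 l1).1
    rw [hd2b] at A
    rw [hd1a] at B
    have : 0 ≤ (pb - pa) * (x1b - x2a) := mul_nonneg (by linarith) (by linarith)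
    linarith
end

section
/- Let f_2 be a self-usage utility function and let 0 ≤ p_a < p_b < q_a < f_2'(0). Set B_a = q_a − p_a, and let s_{2a}, s_{2b} ∈ (0,1) satisfy f_2'(1−s_{2a}) = q_a and f_2'(1−s_{2b}) = p_b (so s_{2b} < s_{2a}). Define the threshold t_a = [ (q_a − p_b)·s_{2a} − (f_2(1−s_{2b}) − f_2(1−s_{2a}) − p_b·(s_{2a} − s_{2b})) ] / B_a. Then: (a) t_a > 0; (b) owner 2 is indifferent to switching, i.e. f_2(1−s_{2a}) + p_a·s_{2a} + B_a·(s_{2a} − t_a) = f_2(1−s_{2b}) + p_b·s_{2b}; and (c) platform a's revenue is strictly positive: (q_a − p_a)·s_{2a} − B_a·(s_{2a} − t_a) = B_a·t_a > 0. Hence a linear loyalty program allows the weaker platform a to obtain strictly positive revenue whenever p_b < q_a. -/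
/-- with bonus B_a = q_a − p_a and the stated threshold t_a, the
weaker platform a makes owner 2 indifferent and earns strictly positive
revenue B_a·t_a whenever p_b < q_a. -/
theorem LLP_positive_revenue_in_competition
    (f f' : ℝ → ℝ) (hf : SelfUsage f f')
    (pa pb qa : ℝ) (hpa : 0 ≤ pa) (hab : pa < pb) (hbq : pb < qa) (hqf : qa < f' 0)
    (Ba : ℝ) (hBa : Ba = qa - pa)
    (s2a s2b : ℝ) (h2a : s2a ∈ Set.Ioo (0:ℝ) 1) (h2b : s2b ∈ Set.Ioo (0:ℝ) 1)
    (hda : f' (1 - s2a) = qa) (hdb : f' (1 - s2b) = pb)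
    (ta : ℝ)
    (hta : ta = ((qa - pb) * s2a
      - (f (1 - s2b) - f (1 - s2a) - pb * (s2a - s2b))) / Ba) :
    0 < ta ∧
    f (1 - s2a) + pa * s2a + Ba * (s2a - ta) = f (1 - s2b) + pb * s2b ∧
    (qa - pa) * s2a - Ba * (s2a - ta) = Ba * ta ∧
    0 < Ba * ta := by
  obtain ⟨hd, -, -, hanti, -⟩ := hf
  obtain ⟨ha0, ha1⟩ := h2a
  obtain ⟨hb0, hb1⟩ := h2b
  have hB : 0 < Ba := by linarith
  have hma : 1 - s2a ∈ Set.Icc (0:ℝ) 1 := ⟨by linarith, by linarith⟩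
  have hmb : 1 - s2b ∈ Set.Icc (0:ℝ) 1 := ⟨by linarith, by linarith⟩
  have hlt : 1 - s2a < 1 - s2b := by
    have h := hanti.lt_iff_gt hmb hma
    rw [hda, hdb] at h
    exact h.mp hbq
  obtain ⟨c, hc, hslope⟩ := exists_hasDerivAt_eq_slope f f' hlt
    (fun x hx => ((hd x ⟨hma.1.trans hx.1, hx.2.trans hmb.2⟩).continuousWithinAt).mono
      (Set.Icc_subset_Icc hma.1 hmb.2))
    (fun x hx => (hd x ⟨hma.1.trans hx.1.le, hx.2.le.trans hmb.2⟩).hasDerivAt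
      (Icc_mem_nhds (lt_of_le_of_lt hma.1 hx.1) (lt_of_lt_of_le hx.2 hmb.2)))
  have hcq : f' c < qa := by
    rw [← hda]
    exact hanti hma ⟨hma.1.trans hc.1.le, hc.2.le.trans hmb.2⟩ hc.1
  have hpos : 0 < 1 - s2b - (1 - s2a) := by linarith
  rw [hslope, div_lt_iff₀ hpos] at hcq
  have hBt : Ba * ta = (qa - pb) * s2a
      - (f (1 - s2b) - f (1 - s2a) - pb * (s2a - s2b)) := by
    rw [hta]; field_simp
  have hrev : 0 < Ba * ta := by
    rw [hBt]
    nlinarith [mul_pos (sub_pos.mpr hbq) hb0]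
  refine ⟨(mul_pos_iff_of_pos_left hB).mp hrev, ?_, ?_, hrev⟩
  · rw [mul_sub, hBt, hBa]; ring
  · rw [hBa]; ring
end

section
/- Let f be a self-usage utility function, let p_a, B_a, p_b ≥ 0 with p_b < p_a + B_a < f'(0) and p_b < f'(0), and let s_a, s_b ∈ (0,1) satisfy f'(1−s_a) = p_a + B_a and f'(1−s_b) = p_b (so s_b < s_a). Then (p_a + B_a − p_b)·s_a − (f(1−s_b) − f(1−s_a) − p_b·(s_a − s_b)) ≥ (p_a + B_a − p_b)·s_b > 0. -/
/-- the maximal feasible B_a·t_a under a linear loyalty program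
attracting an owner away from a platform paying p_b is at least
(p_a + B_a − p_b)·s_b, hence strictly positive. -/
theorem feasible_threshold_positive
    (f f' : ℝ → ℝ) (hf : SelfUsage f f')
    (pa Ba pb : ℝ) (hpa : 0 ≤ pa) (hBa : 0 ≤ Ba) (hpb : 0 ≤ pb)
    (h1 : pb < pa + Ba) (h2 : pa + Ba < f' 0) (h3 : pb < f' 0)
    (sa sb : ℝ) (hsa : sa ∈ Set.Ioo (0:ℝ) 1) (hsb : sb ∈ Set.Ioo (0:ℝ) 1)
    (hda : f' (1 - sa) = pa + Ba) (hdb : f' (1 - sb) = pb) :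
    (pa + Ba - pb) * sb
      ≤ (pa + Ba - pb) * sa - (f (1 - sb) - f (1 - sa) - pb * (sa - sb)) ∧
    0 < (pa + Ba - pb) * sb := by
  obtain ⟨hd, -, -, ha, -⟩ := hf
  obtain ⟨a0, a1⟩ := hsa
  obtain ⟨b0, b1⟩ := hsb
  have hA : 1 - sa ∈ Set.Icc (0:ℝ) 1 := ⟨by linarith, by linarith⟩
  have hB : 1 - sb ∈ Set.Icc (0:ℝ) 1 := ⟨by linarith, by linarith⟩
  have hlt : 1 - sa < 1 - sb := by
    by_contra h
    have := ha.antitoneOn hB hA (not_lt.mp h)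
    linarith
  have hsub : Set.Icc (1 - sa) (1 - sb) ⊆ Set.Icc (0:ℝ) 1 := Set.Icc_subset_Icc hA.1 hB.2
  obtain ⟨c, hc, hceq⟩ := exists_hasDerivAt_eq_slope f f' hlt
    (fun x hx => ((hd x (hsub hx)).continuousWithinAt).mono hsub)
    (fun x hx => (hd x (hsub (Set.Ioo_subset_Icc_self hx))).hasDerivAt
      (Icc_mem_nhds (lt_of_le_of_lt hA.1 hx.1) (lt_of_lt_of_le hx.2 hB.2)))
  have hcl : f' c < f' (1 - sa) := ha hA (hsub (Set.Ioo_subset_Icc_self hc)) hc.1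
  rw [hceq, div_lt_iff₀ (by linarith), hda] at hcl
  exact ⟨by nlinarith, mul_pos (by linarith) b0⟩
end

section
/- Let f_1 and f_2 be self-usage utility functions with f_1'(x) > f_2'(x) for all x ∈ [0,1), and let 0 ≤ p < q < min(f_1'(0), f_2'(0)). Let s_{2a} ∈ (0,1) satisfy f_2'(1−s_{2a}) = q, and for i = 1, 2 let s_{ib} ∈ [0,1) satisfy f_i'(1−s_{ib}) = p (so s_{1b} < s_{2b}). Then (q−p)·s_{2a} − (q−p)·(s_{1b} + s_{2b})/2 − (f_2(1−s_{2b}) − f_2(1−s_{2a}) − p·(s_{2a} − s_{2b})) > 0. (This is the strict positivity of the threshold B_a·t_a chosen by a platform running a linear loyalty program with bonus B_a = q − p against a competitor paying p and offering a sign-up bonus of at most (q−p)(s_{1b} + s_{2b})/2, guaranteeing the loyalty-program platform strictly positive revenue.) -/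
/-- strict positivity of the threshold payoff B_a·t_a of the
linear-loyalty-program platform against a competitor whose sign-up bonus is at
most (q−p)(s_{1b}+s_{2b})/2. -/
theorem LLP_vs_signup_both_owners_positive
    (f1 f1' f2 f2' : ℝ → ℝ) (hf1 : SelfUsage f1 f1') (hf2 : SelfUsage f2 f2')
    (horder : ∀ x ∈ Set.Ico (0:ℝ) 1, f2' x < f1' x)
    (p q : ℝ) (hp : 0 ≤ p) (hpq : p < q) (hq : q < min (f1' 0) (f2' 0))
    (s2a : ℝ) (h2a : s2a ∈ Set.Ioo (0:ℝ) 1) (hd2a : f2' (1 - s2a) = q)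
    (s1b s2b : ℝ) (h1b : s1b ∈ Set.Ico (0:ℝ) 1) (h2b : s2b ∈ Set.Ico (0:ℝ) 1)
    (hd1b : f1' (1 - s1b) = p) (hd2b : f2' (1 - s2b) = p) :
    0 < (q - p) * s2a - (q - p) * (s1b + s2b) / 2
        - (f2 (1 - s2b) - f2 (1 - s2a) - p * (s2a - s2b)) := by
  obtain ⟨hd, _, _, hanti, _⟩ := hf2
  obtain ⟨ha0, ha1⟩ := h2a
  obtain ⟨hb0, hb1⟩ := h2b
  obtain ⟨hc0, hc1⟩ := h1b
  have hA : 1 - s2a ∈ Set.Icc (0:ℝ) 1 := ⟨by linarith, by linarith⟩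
  have hB : 1 - s2b ∈ Set.Icc (0:ℝ) 1 := ⟨by linarith, by linarith⟩
  have hC : 1 - s1b ∈ Set.Icc (0:ℝ) 1 := ⟨by linarith, by linarith⟩
  have h1 : s1b ≤ s2b := by
    by_contra! h
    have e1 := horder (1 - s1b) ⟨by linarith, by linarith⟩
    have e2 := hanti hC hB (by linarith)
    linarith
  have h2 : 1 - s2a < 1 - s2b := by
    by_contra! h
    have := hanti.antitoneOn hB hA h
    linarith
  obtain ⟨c, ⟨hc1', hc2'⟩, hc⟩ := exists_hasDerivAt_eq_slope f2 f2' h2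
    (fun x hx => ((hd x ⟨by linarith [hx.1], by linarith [hx.2]⟩).continuousWithinAt).mono
      (Set.Icc_subset_Icc hA.1 hB.2))
    (fun x hx => (hd x ⟨by linarith [hx.1], by linarith [hx.2]⟩).hasDerivAt
      (Icc_mem_nhds (by linarith [hx.1]) (by linarith [hx.2])))
  have h3 := hanti hA (⟨by linarith, by linarith⟩ : c ∈ Set.Icc (0:ℝ) 1) hc1'
  rw [hd2a, hc, div_lt_iff₀ (by linarith)] at h3
  have h4 : 0 ≤ (q - p) * (s2b - s1b) := mul_nonneg (by linarith) (by linarith)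
  nlinarith
end

section
/- Let f_1 be a self-usage utility function and let 0 ≤ p < q < f_1'(0). Let s_{1a}, s_{1b} ∈ [0,1) satisfy f_1'(1−s_{1a}) = q and f_1'(1−s_{1b}) = p (so s_{1b} < s_{1a}). Then (q−p)·s_{1a} − (q−p)·s_{1b} − (f_1(1−s_{1b}) − f_1(1−s_{1a}) − p·(s_{1a} − s_{1b})) > 0. (This is the strict positivity of the threshold payoff B_a·t_a chosen by a platform running a linear loyalty program with bonus B_a = q − p against a competitor paying p and offering a sign-up bonus of at most (q−p)·s_{1b}; together with the companion bound this shows the linear-loyalty-program platform can always keep strictly positive revenue while forcing the sign-up-bonus platform out of the market.) -/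
/-- strict positivity of the threshold payoff B_a·t_a of the
linear-loyalty-program platform against a competitor whose sign-up bonus is at
most (q−p)·s_{1b}. -/
theorem LLP_vs_signup_one_owner_positive
    (f f' : ℝ → ℝ) (hf : SelfUsage f f')
    (p q : ℝ) (hp : 0 ≤ p) (hpq : p < q) (hqf : q < f' 0)
    (s1a s1b : ℝ) (h1a : s1a ∈ Set.Ico (0:ℝ) 1) (h1b : s1b ∈ Set.Ico (0:ℝ) 1)
    (hda : f' (1 - s1a) = q) (hdb : f' (1 - s1b) = p) :
    0 < (q - p) * s1a - (q - p) * s1b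
        - (f (1 - s1b) - f (1 - s1a) - p * (s1a - s1b)) := by
  obtain ⟨hd, -, -, hanti, -⟩ := hf
  obtain ⟨ha0, ha1⟩ := h1a
  obtain ⟨hb0, hb1⟩ := h1b
  have hxm : 1 - s1a ∈ Set.Icc (0:ℝ) 1 := ⟨by linarith, by linarith⟩
  have hym : 1 - s1b ∈ Set.Icc (0:ℝ) 1 := ⟨by linarith, by linarith⟩
  have hlt : 1 - s1a < 1 - s1b := by
    rw [← hanti.lt_iff_gt hym hxm, hda, hdb]
    exact hpq
  have hsub : Set.Icc (1 - s1a) (1 - s1b) ⊆ Set.Icc (0:ℝ) 1 :=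
    Set.Icc_subset_Icc hxm.1 hym.2
  obtain ⟨c, hc, hfc⟩ := exists_hasDerivAt_eq_slope f f' hlt
    (fun x hx => (hd x (hsub hx)).continuousWithinAt.mono hsub)
    (fun x hx => (hd x (hsub (Set.Ioo_subset_Icc_self hx))).hasDerivAt
      (Icc_mem_nhds (by linarith [hx.1]) (by linarith [hx.2])))
  have hcq : f' c < q := by
    rw [← hda]
    exact hanti hxm (hsub (Set.Ioo_subset_Icc_self hc)) hc.1
  rw [eq_div_iff (by linarith)] at hfc
  nlinarith [mul_pos (sub_pos.2 hcq) (sub_pos.2 hlt)]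
end

section
/- Let f be a self-usage utility function, and let p_a, p_b, B_a, t_a satisfy 0 ≤ p_a < p_b < p_a + B_a and t_a ∈ [0,1]. Define the owner's utility U(s_a, s_b) = f(1 − s_a − s_b) + p_a·s_a + p_b·s_b + B_a·max(s_a − t_a, 0) on the feasible set {s_a, s_b ≥ 0, s_a + s_b ≤ 1}. Then for every feasible (s_a, s_b) with s_a > 0 and s_b > 0: if s_a ≥ t_a then U(s_a + s_b, 0) > U(s_a, s_b), and if s_a < t_a then U(0, s_a + s_b) > U(s_a, s_b). Consequently every maximizer of U satisfies s_a·s_b = 0, i.e. when platform a adopts a linear loyalty program and platform b adopts none, no owner shares on both platforms simultaneously. -/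
/-- when platform a runs a linear loyalty program and platform b
none, sharing on both platforms simultaneously is never optimal: every
maximizer satisfies s_a·s_b = 0. -/
theorem LLP_induces_exclusive_sharing
    (f f' : ℝ → ℝ) (hf : SelfUsage f f')
    (pa pb Ba ta : ℝ) (hpa : 0 ≤ pa) (hab : pa < pb) (hb : pb < pa + Ba)
    (hta : ta ∈ Set.Icc (0:ℝ) 1) :
    (∀ sa sb : ℝ, 0 ≤ sa → 0 ≤ sb → sa + sb ≤ 1 → 0 < sa → 0 < sb →
      (ta ≤ sa →
        f (1 - (sa + sb) - 0) + pa * (sa + sb) + pb * 0 + Ba * max ((sa + sb) - ta) 0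
          > f (1 - sa - sb) + pa * sa + pb * sb + Ba * max (sa - ta) 0) ∧
      (sa < ta →
        f (1 - 0 - (sa + sb)) + pa * 0 + pb * (sa + sb) + Ba * max ((0:ℝ) - ta) 0
          > f (1 - sa - sb) + pa * sa + pb * sb + Ba * max (sa - ta) 0)) ∧
    (∀ sa sb : ℝ, 0 ≤ sa → 0 ≤ sb → sa + sb ≤ 1 →
      (∀ sa' sb' : ℝ, 0 ≤ sa' → 0 ≤ sb' → sa' + sb' ≤ 1 →
        f (1 - sa' - sb') + pa * sa' + pb * sb' + Ba * max (sa' - ta) 0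
          ≤ f (1 - sa - sb) + pa * sa + pb * sb + Ba * max (sa - ta) 0) →
      sa * sb = 0) := by
  have key : (∀ sa sb : ℝ, 0 ≤ sa → 0 ≤ sb → sa + sb ≤ 1 → 0 < sa → 0 < sb →
      (ta ≤ sa →
        f (1 - (sa + sb) - 0) + pa * (sa + sb) + pb * 0 + Ba * max ((sa + sb) - ta) 0
          > f (1 - sa - sb) + pa * sa + pb * sb + Ba * max (sa - ta) 0) ∧
      (sa < ta →
        f (1 - 0 - (sa + sb)) + pa * 0 + pb * (sa + sb) + Ba * max ((0:ℝ) - ta) 0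
          > f (1 - sa - sb) + pa * sa + pb * sb + Ba * max (sa - ta) 0)) := by
    intro sa sb _ _ _ h1 h2
    have e1 : 1 - (sa + sb) - 0 = 1 - sa - sb := by ring
    have e2 : 1 - 0 - (sa + sb) = 1 - sa - sb := by ring
    rw [e1, e2]
    constructor
    · intro h
      rw [max_eq_left (by linarith), max_eq_left (by linarith)]
      nlinarith [mul_pos h2 (sub_pos.2 hb)]
    · intro h
      rw [max_eq_right (by linarith [hta.1]), max_eq_right (by linarith)]
      nlinarith [mul_pos h1 (sub_pos.2 hab)]
  refine ⟨key, ?_⟩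
  intro sa sb ha hb' hs hmax
  by_contra hne
  have h1 : 0 < sa := lt_of_le_of_ne ha (fun h => hne (by rw [← h, zero_mul]))
  have h2 : 0 < sb := lt_of_le_of_ne hb' (fun h => hne (by rw [← h, mul_zero]))
  obtain ⟨k1, k2⟩ := key sa sb ha hb' hs h1 h2
  rcases le_or_gt ta sa with h | h
  · exact absurd (hmax (sa + sb) 0 (by linarith) le_rfl (by linarith)) (not_le.2 (k1 h))
  · exact absurd (hmax 0 (sa + sb) le_rfl (by linarith) (by linarith)) (not_le.2 (k2 h))
end
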